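/- For all m ≥ 3 and n ≥ 2, there exist a word w of length m−2 over the two-letter alphabet Σ = {a, b} and a language T over Σ accepted by a DFA with n states, such that the language (Σ*·{w}·Σ*) ∩ T is accepted by some DFA with (m−1)·n states and every DFA accepting it has at least (m−1)·n states. -/

import Mathlib

/-!
Take `w = 0^k` with `k = m - 2`, and let `T` be the language of words whose number of `1`s is
divisible by `n`. The words containing `0^k` are recognised by the automaton on `{0, …, k}` which
counts the current run of trailing `0`s and stays in `k` once it is reached, so the product with
the `n`-state counter of `1`s is a DFA with `(k + 1) * n` states (`accepts_runDFA`,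
`accepts_countDFA`).

For the lower bound, the words `1^j 0^i` with `i ≤ k` and `j < n` are pairwise inequivalent for
the intersection (`witness_injective`). If `j ≠ j'`, the suffix `0^k 1^(n-j)` forces the factor
`0^k` to occur and leaves the count of `1`s divisible by `n` only for `j`. If `j = j'` and
`i < i'`, the suffix `0^(k-i') 1^(n-j)` completes the factor `0^k` only for `i'`: the other word
has fewer than `k` letters `0` altogether.
-/

open Language

/-- `L` is accepted by some DFA with exactly `k` states. -/
def AcceptedByDFAWith {α : Type} (L : Language α) (k : ℕ) : Prop :=
  ∃ M : DFA α (Fin k), M.accepts = L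

theorem mem_top_mul_singleton_mul_top (w x : List (Fin 2)) :
    x ∈ (⊤ : Language (Fin 2)) * ({w} : Language (Fin 2)) * (⊤ : Language (Fin 2)) ↔
      w <:+: x := by
  simp only [Language.mem_mul]
  constructor
  · rintro ⟨_, ⟨s, -, v, hv, rfl⟩, t, -, rfl⟩
    obtain rfl : v = w := hv
    exact ⟨s, t, rfl⟩
  · rintro ⟨s, t, rfl⟩
    exact ⟨s ++ w, ⟨s, trivial, w, rfl, rfl⟩, t, trivial, rfl⟩

/-- A factor `0^k` cannot overlap a leading block `0^s 1` with `s < k`. -/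
theorem replicate_infix_append_one_cons (k s : ℕ) (hs : s < k) (x : List (Fin 2)) :
    List.replicate k 0 <:+: List.replicate s 0 ++ 1 :: x ↔ List.replicate k 0 <:+: x := by
  induction s with
  | zero =>
    obtain ⟨k, rfl⟩ : ∃ l, k = l + 1 := ⟨k - 1, by omega⟩
    simp [List.infix_cons_iff, List.replicate_succ]
  | succ s ih =>
    rw [List.replicate_succ, List.cons_append, List.infix_cons_iff, ih (by omega)]
    refine or_iff_right fun h => ?_
    rw [← List.cons_append, ← List.replicate_succ] at h
    have h1 := h.getElem (i := s + 1) (by simpa using hs)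
    simp at h1

/-- The automaton of words containing the factor `0^k`: state `i < k` records a trailing block of
exactly `i` zeros, and the absorbing state `k` records that the factor has occurred. -/
def runDFA (k : ℕ) : DFA (Fin 2) (Fin (k + 1)) where
  step i c := if h : (i : ℕ) < k then (if c = 0 then ⟨i + 1, by omega⟩ else 0) else i
  start := 0
  accept := {Fin.last k}

/-- State `s` of `runDFA k` is equivalent to having read exactly `0^s`. -/
theorem mem_acceptsFrom_runDFA (k : ℕ) (x : List (Fin 2)) (s : Fin (k + 1)) :
    x ∈ (runDFA k).acceptsFrom s ↔
      List.replicate k 0 <:+: List.replicate (s : ℕ) 0 ++ x := by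
  induction x generalizing s with
  | nil =>
    have h : List.replicate k (0 : Fin 2) <:+: List.replicate (s : ℕ) 0 ↔ k ≤ s := by
      constructor
      · intro h
        simpa using h.length_le
      · intro h
        obtain ⟨d, hd⟩ := Nat.exists_eq_add_of_le h
        rw [hd, List.replicate_add]
        exact (List.prefix_append _ _).isInfix
    rw [DFA.mem_acceptsFrom, DFA.evalFrom_nil, List.append_nil, h]
    simp only [runDFA, Set.mem_singleton_iff, Fin.ext_iff, Fin.val_last]
    omega
  | cons c x ih =>
    rw [DFA.mem_acceptsFrom, DFA.evalFrom_cons, ← DFA.mem_acceptsFrom, ih]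
    by_cases h : (s : ℕ) < k
    · by_cases hc : c = 0
      · subst hc
        simp [runDFA, h, List.replicate_succ']
      · obtain rfl : c = 1 := by omega
        rw [replicate_infix_append_one_cons k s h]
        simp [runDFA, h]
    · have hs : (s : ℕ) = k := by omega
      have hstep : (runDFA k).step s c = s := dif_neg h
      rw [hstep, hs]
      exact iff_of_true (List.prefix_append _ _).isInfix (List.prefix_append _ _).isInfix

theorem accepts_runDFA (k : ℕ) :
    (runDFA k).accepts =
      (⊤ : Language (Fin 2)) * ({List.replicate k 0} : Language (Fin 2)) *
        (⊤ : Language (Fin 2)) := by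
  ext x
  rw [mem_top_mul_singleton_mul_top]
  exact mem_acceptsFrom_runDFA k x 0

/-- The words whose number of `1`s is divisible by `n`. -/
def countLanguage (n : ℕ) : Language (Fin 2) := {x | n ∣ x.count 1}

/-- The automaton counting the letters `1` modulo `n`. -/
def countDFA (n : ℕ) [NeZero n] : DFA (Fin 2) (Fin n) where
  step j c := if c = 1 then j + 1 else j
  start := 0
  accept := {0}

theorem accepts_countDFA (n : ℕ) [NeZero n] : (countDFA n).accepts = countLanguage n := by
  have key : ∀ x, (countDFA n).eval x = Fin.ofNat n (x.count 1) := by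
    intro x
    induction x using List.reverseRecOn with
    | nil => simp [countDFA]
    | append_singleton x c ih =>
      rw [DFA.eval_append_singleton, ih, List.count_append]
      by_cases hc : c = 1
      · subst hc
        simp [countDFA, Fin.ext_iff, Fin.val_add]
      · simp [countDFA, hc]
  ext x
  rw [DFA.mem_accepts, key]
  simp [countDFA, countLanguage, Fin.ext_iff, Nat.dvd_iff_mod_eq_zero]
  rfl

/-- The words containing the factor `0^k` whose number of `1`s is divisible by `n`. -/
def witnessLanguage (k n : ℕ) : Language (Fin 2) :=
  (⊤ : Language (Fin 2)) * ({List.replicate k 0} : Language (Fin 2)) * (⊤ : Language (Fin 2)) ⊓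
    countLanguage n

theorem mem_witnessLanguage (k n : ℕ) (x : List (Fin 2)) :
    x ∈ witnessLanguage k n ↔ List.replicate k 0 <:+: x ∧ n ∣ x.count 1 := by
  rw [← mem_top_mul_singleton_mul_top]
  rfl

/-- The representative `1^j 0^i` of the state `(i, j)` of the product automaton. -/
def witness (i j : ℕ) : List (Fin 2) := List.replicate j 1 ++ List.replicate i 0

/-- Words `1^j 0^i` and `1^j' 0^i'` with the same right context in the language have `j = j'`. -/
theorem witness_snd_eq {k n i i' j j' : ℕ} (hj : j < n) (hj' : j' < n)
    (h : ∀ z, witness i j ++ z ∈ witnessLanguage k n ↔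
      witness i' j' ++ z ∈ witnessLanguage k n) : j = j' := by
  have h1 := h (List.replicate k 0 ++ List.replicate (n - j) 1)
  have hf : ∀ p q : List (Fin 2), List.replicate k 0 <:+: p ++ (List.replicate k 0 ++ q) :=
    fun p q => ⟨p, q, by simp⟩
  simp only [mem_witnessLanguage, hf, true_and] at h1
  simp only [witness, List.count_append, List.count_replicate] at h1
  norm_num at h1
  rw [Nat.add_sub_cancel' hj.le] at h1
  obtain ⟨d, hd⟩ := h1.1 dvd_rfl
  -- `0 < j' + (n - j) < 2 * n`, so the only possible multiple of `n` is `n` itself.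
  have hd1 : d = 1 := by
    have h0 : 0 < d := Nat.pos_of_ne_zero (by rintro rfl; omega)
    have h2 : d < 2 := by
      by_contra! h2
      have := Nat.mul_le_mul_left n h2
      omega
    omega
  subst hd1
  omega

/-- For equal `j`, the word `1^j 0^i` needs strictly more zeros than `1^j 0^i'` to complete `0^k`
when `i < i'`, so the two right contexts differ. -/
theorem witness_not_fst_lt {k n i i' j : ℕ} (hj : j < n) (hi' : i' ≤ k)
    (h : ∀ z, witness i j ++ z ∈ witnessLanguage k n ↔
      witness i' j ++ z ∈ witnessLanguage k n) : ¬ i < i' := by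
  intro hlt
  have h1 := (h (List.replicate (k - i') 0 ++ List.replicate (n - j) 1)).2 (by
    rw [mem_witnessLanguage]
    constructor
    · refine ⟨List.replicate j 1, List.replicate (n - j) 1, ?_⟩
      have hk : List.replicate k (0 : Fin 2) =
          List.replicate i' 0 ++ List.replicate (k - i') 0 := by
        rw [List.replicate_append_replicate, Nat.add_sub_cancel' hi']
      simp only [witness, hk, List.append_assoc]
    · simp [witness, List.count_append, List.count_replicate, Nat.add_sub_cancel' hj.le])
  have h2 := ((mem_witnessLanguage _ _ _).1 h1).1.sublist.count_le 0
  simp [witness, List.count_append, List.count_replicate] at h2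
  omega

theorem witness_injective {k n i i' j j' : ℕ} (hi : i ≤ k) (hi' : i' ≤ k) (hj : j < n)
    (hj' : j' < n)
    (h : ∀ z, witness i j ++ z ∈ witnessLanguage k n ↔
      witness i' j' ++ z ∈ witnessLanguage k n) : i = i' ∧ j = j' := by
  obtain rfl := witness_snd_eq hj hj' h
  have h1 := witness_not_fst_lt hj hi' h
  have h2 := witness_not_fst_lt hj hi fun z => (h z).symm
  exact ⟨by omega, rfl⟩

/-- Tightness of the `(m-1)·n` bound for single-word factor matching over a binary
alphabet: the word has length `m - 2` and the intersection has state complexity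
exactly `(m-1)·n`. -/
theorem single_factor_tight (m n : ℕ) (hm : 3 ≤ m) (hn : 2 ≤ n) :
    ∃ w : List (Fin 2), w.length = m - 2 ∧
      ∃ T : Language (Fin 2), AcceptedByDFAWith T n ∧
        AcceptedByDFAWith
          (((⊤ : Language (Fin 2)) * ({w} : Language (Fin 2)) * (⊤ : Language (Fin 2))) ⊓ T)
          ((m - 1) * n) ∧
        ∀ (σ : Type) [Fintype σ] (D : DFA (Fin 2) σ),
          D.accepts =
              ((⊤ : Language (Fin 2)) * ({w} : Language (Fin 2)) * (⊤ : Language (Fin 2))) ⊓ T →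
            (m - 1) * n ≤ Fintype.card σ := by
  obtain ⟨k, rfl⟩ : ∃ k, m = k + 2 := ⟨m - 2, by omega⟩
  have : NeZero n := ⟨by omega⟩
  refine ⟨List.replicate k 0, by simp, countLanguage n, ⟨countDFA n, accepts_countDFA n⟩, ?_, ?_⟩
  · refine ⟨DFA.reindex finProdFinEquiv ((runDFA k).inter (countDFA n)), ?_⟩
    rw [DFA.accepts_reindex, DFA.accepts_inter, accepts_runDFA, accepts_countDFA]
  · intro σ _ D hD
    have hinj : Function.Injective
        fun p : Fin (k + 1) × Fin n => D.eval (witness p.1 p.2) := by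
      rintro ⟨i, j⟩ ⟨i', j'⟩ heq
      have h := witness_injective (k := k) (n := n) (i := i) (i' := i') (j := j) (j' := j')
        (by omega) (by omega) j.2 j'.2 (fun z => by
          have hz : ∀ p, p ++ z ∈ witnessLanguage k n ↔ D.evalFrom (D.eval p) z ∈ D.accept := by
            intro p
            rw [witnessLanguage, ← hD, DFA.mem_accepts, DFA.eval, DFA.evalFrom_of_append]
          rw [hz, hz, show D.eval (witness i j) = D.eval (witness i' j') from heq])
      exact Prod.ext (Fin.ext h.1) (Fin.ext h.2)
    simpa using Fintype.card_le_of_injective _ hinj
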